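/- arXiv:2201.00045 — 2 statements merged into one kernel-verified Lean document; each statement's English description precedes it below -/
import Mathlib

section
/- Let H be the half-twist operator on F^{({1,…,n}ⁿ)}, defined as the product over the standard reduced word of the longest permutation: H = (R̂₁)·(R̂₂R̂₁)·(R̂₃R̂₂R̂₁)⋯(R̂_{n−1}R̂_{n−2}⋯R̂₁), a product of n(n−1)/2 factors. Then H · w₊ = (−1)^{n(n−1)/2} · q^{−(n²−1)/2} · w₊, i.e. the q-antisymmetrizer vector is an eigenvector of the positive half-twist with eigenvalue t^{−n/2}, where t = (−1)^{n−1} q^{(n²−1)/n}. -/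
/-!
Statement 5: let H be the half-twist operator, the product over the standard
reduced word of the longest permutation:
H = (R̂₁)·(R̂₂R̂₁)·(R̂₃R̂₂R̂₁)⋯(R̂_{n−1}⋯R̂₁)  (n(n−1)/2 factors).
Then H·w₊ = (−1)^{n(n−1)/2} q^{−(n²−1)/2} w₊ = t^{−n/2} w₊.
Here F = ℚ(v), q = v^{2n}, so the eigenvalue is (−1)^{n(n−1)/2} v^{−n(n²−1)}.
-/

set_option synthInstance.maxHeartbeats 1000000
set_option maxHeartbeats 1000000

noncomputable section

abbrev F : Type := RatFunc ℚ

def vv : F := RatFunc.X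

/-- The braiding matrix `R̂`. -/
def Rhat (n : ℕ) : Matrix (Fin n × Fin n) (Fin n × Fin n) F := fun p r =>
  vv ^ (-2 : ℤ) *
    ((if p.1 = p.2 then vv ^ (2 * (n : ℤ)) else 1) *
        (if p.1 = r.2 then 1 else 0) * (if p.2 = r.1 then 1 else 0) +
      (vv ^ (2 * (n : ℤ)) - vv ^ (-(2 * (n : ℤ)))) *
        (if p.1 < p.2 then 1 else 0) * (if p.1 = r.1 then 1 else 0) *
        (if p.2 = r.2 then 1 else 0))

/-- `R̂_m` acting on the (1-based) m-th and (m+1)-st tensor factors of `(Fⁿ)^{⊗k}`. -/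
def RhatM (n k m : ℕ) : Matrix (Fin k → Fin n) (Fin k → Fin n) F := fun i j =>
  if h : m - 1 < k ∧ m < k then
    Rhat n (i ⟨m - 1, h.1⟩, i ⟨m, h.2⟩) (j ⟨m - 1, h.1⟩, j ⟨m, h.2⟩) *
      ∏ r : Fin k,
        (if r.val = m - 1 ∨ r.val = m then 1 else if i r = j r then (1 : F) else 0)
  else 0

/-- Inversion number of a tuple. -/
def ell (n : ℕ) (i : Fin n → Fin n) : ℕ :=
  (Finset.univ.filter fun p : Fin n × Fin n => p.1 < p.2 ∧ i p.2 < i p.1).card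

/-- `(−q)^{ℓ(i)}`, set to 0 when `i` is not a bijection of {1,…,n}. -/
def mqpow (n : ℕ) (i : Fin n → Fin n) : F :=
  if Function.Bijective i then (-(vv ^ (2 * (n : ℤ)))) ^ ell n i else 0

/-- The constant `a = q^{(1−n)(2n+1)/4} = v^{n(1−n)(2n+1)/2}`. -/
def aConst (n : ℕ) : F := vv ^ (((n : ℤ) * (1 - (n : ℤ)) * (2 * (n : ℤ) + 1)) / 2)

/-- The q-antisymmetrizer vector `w₊`, with coordinates `w₊(i) = a·(−q)^{ℓ(i)}`. -/
def wPlus (n : ℕ) : (Fin n → Fin n) → F := fun i => aConst n * mqpow n i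

/-- The positive half-twist
`H = (R̂₁)·(R̂₂R̂₁)·(R̂₃R̂₂R̂₁)⋯(R̂_{n−1}R̂_{n−2}⋯R̂₁)`. -/
def halfTwist (n : ℕ) : Matrix (Fin n → Fin n) (Fin n → Fin n) F :=
  (((List.range (n - 1)).map fun s =>
      (((List.range (s + 1)).reverse).map fun t => RhatM n n (t + 1)).prod)).prod

theorem vv_ne : vv ≠ 0 := RatFunc.X_ne_zero

theorem ell_swap (n : ℕ) (i : Fin n → Fin n) (a b : Fin n) (hab : b.val = a.val + 1)
    (h : i a < i b) : ell n (i ∘ Equiv.swap a b) = ell n i + 1 := by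
  classical
  unfold ell
  have hne : a ≠ b := by
    intro h; rw [h] at hab; omega
  set s := Equiv.swap a b with hs
  have hsa : s a = b := Equiv.swap_apply_left a b
  have hsb : s b = a := Equiv.swap_apply_right a b
  have hso : ∀ x, x ≠ a → x ≠ b → s x = x := fun x h1 h2 => Equiv.swap_apply_of_ne_of_ne h1 h2
  have key : (Finset.univ.filter fun p : Fin n × Fin n =>
        p.1 < p.2 ∧ (i ∘ s) p.2 < (i ∘ s) p.1) =
      insert (a, b) ((Finset.univ.filter fun p : Fin n × Fin n =>
        p.1 < p.2 ∧ i p.2 < i p.1).map (s.prodCongr s).toEmbedding) := by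
    ext ⟨p, r⟩
    have hss : s.symm = s := Equiv.symm_swap a b
    simp only [Finset.mem_filter, Finset.mem_univ, true_and, Finset.mem_insert,
      Finset.mem_map_equiv, Function.comp, Equiv.prodCongr_symm, Equiv.prodCongr_apply,
      Prod.map, hss, Prod.mk.injEq]
    by_cases hpa : p = a
    · subst hpa
      by_cases hrb : r = b
      · subst hrb
        simp [hsa, hsb, h, Fin.lt_def, hab]
      · by_cases hrp : r = p
        · subst hrp
          simp [hrb]
        · rw [hsa, hso r hrp hrb]
          have : r.val ≠ b.val := fun h => hrb (Fin.ext h)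
          have : (p < r ↔ b < r) := by simp only [Fin.lt_def]; omega
          simp [hrb, this]
    · by_cases hpb : p = b
      · subst hpb
        by_cases hra : r = a
        · subst hra
          have h1 : ¬ (p < r) := by simp only [Fin.lt_def]; omega
          simp [hsa, hsb, hpa, h1, h.le]
        · by_cases hrp : r = p
          · subst hrp
            simp [hpa]
          · rw [hsb, hso r hra hrp]
            have : r.val ≠ p.val := fun h => hrp (Fin.ext h)
            have : r.val ≠ a.val := fun h => hra (Fin.ext h)
            have : (p < r ↔ a < r) := by simp only [Fin.lt_def]; omega
            simp [hpa, this]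
      · rw [hso p hpa hpb]
        have : p.val ≠ a.val := fun h => hpa (Fin.ext h)
        have : p.val ≠ b.val := fun h => hpb (Fin.ext h)
        by_cases hra : r = a
        · subst hra
          have : (p < r ↔ p < b) := by simp only [Fin.lt_def]; omega
          simp [hsa, hpa, this]
        · by_cases hrb : r = b
          · subst hrb
            have : (p < r ↔ p < a) := by simp only [Fin.lt_def]; omega
            simp [hsb, hpa, this]
          · rw [hso r hra hrb]
            simp [hpa]
  rw [key, Finset.card_insert_of_notMem, Finset.card_map]
  simp only [Finset.mem_map_equiv, Finset.mem_filter, Finset.mem_univ, true_and, not_and]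
  have hss : s.symm = s := Equiv.symm_swap a b
  simp only [Equiv.prodCongr_symm, Equiv.prodCongr_apply, Prod.map, hss, hsa, hsb, Fin.lt_def]
  omega

theorem mqpow_swap (n : ℕ) (i : Fin n → Fin n) (a b : Fin n) (hab : b.val = a.val + 1)
    (h : i a < i b) :
    mqpow n (i ∘ Equiv.swap a b) = -(vv ^ (2 * (n : ℤ))) * mqpow n i := by
  unfold mqpow
  have : Function.Bijective (i ∘ Equiv.swap a b) ↔ Function.Bijective i :=
    Function.Bijective.of_comp_iff i (Equiv.swap a b).bijective
  by_cases hb : Function.Bijective i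
  · rw [if_pos hb, if_pos (this.2 hb), ell_swap n i a b hab h, pow_succ, mul_comm]
  · rw [if_neg hb, if_neg (fun h => hb (this.1 h)), mul_zero]

theorem prod_ind (n : ℕ) (i j : Fin n → Fin n) (m : ℕ) :
    (∏ r : Fin n, (if r.val = m ∨ r.val = m + 1 then 1 else if i r = j r then (1 : F) else 0)) =
      if ∀ r : Fin n, r.val ≠ m → r.val ≠ m + 1 → i r = j r then 1 else 0 := by
  split_ifs with h
  · apply Finset.prod_eq_one
    intro r _
    by_cases h1 : r.val = m
    · simp [h1]
    · by_cases h2 : r.val = m + 1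
      · simp [h2]
      · simp [h r h1 h2]
  · push Not at h
    obtain ⟨r, h1, h2, h3⟩ := h
    apply Finset.prod_eq_zero (Finset.mem_univ r)
    simp [h1, h2, h3]

theorem RhatM_apply (n m : ℕ) (hm : m + 1 < n) (i j : Fin n → Fin n) (a b : Fin n)
    (ha : a.val = m) (hb : b.val = m + 1) :
    RhatM n n (m + 1) i j = vv ^ (-2 : ℤ) *
      ((if i a = i b then vv ^ (2 * (n : ℤ)) else 1) *
        (if i ∘ Equiv.swap a b = j then 1 else 0) +
       (vv ^ (2 * (n : ℤ)) - vv ^ (-(2 * (n : ℤ)))) *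
        (if i a < i b then 1 else 0) * (if i = j then 1 else 0)) := by
  have e1 : (i ∘ Equiv.swap a b = j) ↔ (i a = j b ∧ i b = j a ∧
      ∀ r : Fin n, r.val ≠ m → r.val ≠ m + 1 → i r = j r) := by
    constructor
    · rintro rfl
      refine ⟨by simp, by simp, fun r h1 h2 => ?_⟩
      have h3 : r ≠ a := fun h => h1 (h ▸ ha)
      have h4 : r ≠ b := fun h => h2 (h ▸ hb)
      simp [Equiv.swap_apply_of_ne_of_ne h3 h4]
    · rintro ⟨h1, h2, h3⟩
      funext r
      by_cases hra : r = a
      · subst hra; simp [h2]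
      · by_cases hrb : r = b
        · subst hrb; simp [h1]
        · simp only [Function.comp, Equiv.swap_apply_of_ne_of_ne hra hrb]
          exact h3 r (fun h => hra (Fin.ext (h.trans ha.symm)))
            (fun h => hrb (Fin.ext (h.trans hb.symm)))
  have e2 : (i = j) ↔ (i a = j a ∧ i b = j b ∧
      ∀ r : Fin n, r.val ≠ m → r.val ≠ m + 1 → i r = j r) := by
    constructor
    · rintro rfl
      simp
    · rintro ⟨h1, h2, h3⟩
      funext r
      by_cases hra : r = a
      · subst hra; exact h1
      · by_cases hrb : r = b
        · subst hrb; exact h2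
        · exact h3 r (fun h => hra (Fin.ext (h.trans ha.symm)))
            (fun h => hrb (Fin.ext (h.trans hb.symm)))
  have hc : m + 1 - 1 < n ∧ m + 1 < n := ⟨by omega, hm⟩
  have ea : (⟨m + 1 - 1, hc.1⟩ : Fin n) = a := Fin.ext (by simp [ha])
  have eb : (⟨m + 1, hc.2⟩ : Fin n) = b := Fin.ext hb.symm
  unfold RhatM
  rw [dif_pos hc, ea, eb]
  simp only [Nat.add_sub_cancel]
  rw [prod_ind]
  unfold Rhat
  by_cases hP : ∀ r : Fin n, r.val ≠ m → r.val ≠ m + 1 → i r = j r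
  · have e1' : (i ∘ Equiv.swap a b = j) ↔ (i a = j b ∧ i b = j a) := by
      rw [e1]; tauto
    have e2' : (i = j) ↔ (i a = j a ∧ i b = j b) := by
      rw [e2]; tauto
    rw [if_pos hP, if_congr e1' rfl rfl, if_congr e2' rfl rfl, ite_and, ite_and]
    simp only [mul_one]
    split_ifs <;> ring
  · have e1' : ¬ (i ∘ Equiv.swap a b = j) := by rw [e1]; tauto
    have e2' : ¬ (i = j) := by rw [e2]; tauto
    rw [if_neg hP, if_neg e1', if_neg e2']
    ring

theorem RhatM_wPlus (n m : ℕ) (hm : m + 1 < n) :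
    (RhatM n n (m + 1)).mulVec (wPlus n) = (-vv ^ (-(2 * (n : ℤ) + 2))) • wPlus n := by
  funext i
  let a : Fin n := ⟨m, by omega⟩
  let b : Fin n := ⟨m + 1, hm⟩
  have hv := vv_ne
  have hmain : (RhatM n n (m + 1)).mulVec (wPlus n) i = vv ^ (-2 : ℤ) *
      ((if i a = i b then vv ^ (2 * (n : ℤ)) else 1) * wPlus n (i ∘ Equiv.swap a b) +
       (vv ^ (2 * (n : ℤ)) - vv ^ (-(2 * (n : ℤ)))) *
        (if i a < i b then 1 else 0) * wPlus n i) := by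
    simp only [Matrix.mulVec, dotProduct]
    simp_rw [fun j => RhatM_apply n m hm i j a b rfl rfl]
    simp_rw [mul_assoc, add_mul, mul_assoc]
    rw [← Finset.mul_sum, Finset.sum_add_distrib]
    simp only [← Finset.mul_sum, ite_mul, one_mul, zero_mul, Finset.sum_ite_eq,
      Finset.mem_univ, if_true]
    split_ifs <;> simp [← Finset.mul_sum]
  have hab : b.val = a.val + 1 := rfl
  have hne : a ≠ b := by
    intro h; rw [h] at hab; omega
  rw [hmain, Pi.smul_apply, smul_eq_mul]
  have hexp : vv ^ (-(2 * (n : ℤ) + 2)) = vv ^ (-2 : ℤ) * (vv ^ (2 * (n : ℤ)))⁻¹ := by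
    rw [neg_add, zpow_add₀ hv, zpow_neg vv (2 * (n : ℤ)), mul_comm]
  have hQ : vv ^ (2 * (n : ℤ)) ≠ 0 := zpow_ne_zero _ hv
  rw [hexp, zpow_neg vv (2 * (n : ℤ))]
  unfold wPlus
  set Q := vv ^ (2 * (n : ℤ)) with hQd
  rcases lt_trichotomy (i a) (i b) with h | h | h
  · have := mqpow_swap n i a b hab h
    rw [this, if_neg h.ne, if_pos h]
    field_simp
    ring
  · have h1 : mqpow n i = 0 := by
      unfold mqpow
      rw [if_neg]
      exact fun hb => hne (hb.1 h)
    have h2 : mqpow n (i ∘ Equiv.swap a b) = 0 := by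
      unfold mqpow
      rw [if_neg]
      intro hb
      exact hne (((Function.Bijective.of_comp_iff i (Equiv.swap a b).bijective).1 hb).1 h)
    rw [h1, h2]; ring
  · have := mqpow_swap n (i ∘ Equiv.swap a b) a b hab (by simpa using h)
    have hii : (i ∘ Equiv.swap a b) ∘ Equiv.swap a b = i := by
      funext x; simp
    rw [hii] at this
    rw [this, if_neg h.ne', if_neg h.not_gt]
    field_simp
    ring

theorem list_eig {ι : Type} [Fintype ι] [DecidableEq ι] {α : Type} (f : α → Matrix ι ι F)
    (w : ι → F) (c : F) (e : α → ℕ) (L : List α)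
    (h : ∀ x ∈ L, (f x).mulVec w = c ^ e x • w) :
    (L.map f).prod.mulVec w = c ^ (L.map e).sum • w := by
  induction L with
  | nil => simp
  | cons x L ih =>
    rw [List.map_cons, List.prod_cons, ← Matrix.mulVec_mulVec,
      ih (fun y hy => h y (List.mem_cons_of_mem _ hy)), Matrix.mulVec_smul,
      h x List.mem_cons_self, List.map_cons, List.sum_cons, smul_smul, pow_add, mul_comm]

theorem halfTwist_wPlus (n : ℕ) (hn : 2 ≤ n) :
    (halfTwist n).mulVec (wPlus n) =
      ((-1 : F) ^ (n * (n - 1) / 2) * vv ^ (-((n : ℤ) * ((n : ℤ) ^ 2 - 1)))) • wPlus n := by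
  unfold halfTwist
  rw [list_eig _ (wPlus n) (-vv ^ (-(2 * (n : ℤ) + 2))) (fun s => s + 1)]
  · have hsum : ∀ k : ℕ, 2 * ((List.range k).map (fun s => s + 1)).sum = (k + 1) * k := by
      intro k
      induction k with
      | zero => simp
      | succ k ih =>
        rw [List.range_succ, List.map_append, List.sum_append, mul_add, ih]
        simp
        ring
    have h2 := hsum (n - 1)
    rw [Nat.sub_add_cancel (by omega : 1 ≤ n)] at h2
    have h3 : n * (n - 1) / 2 = ((List.range (n - 1)).map (fun s => s + 1)).sum := by omega
    rw [h3]
    generalize ((List.range (n - 1)).map (fun s => s + 1)).sum = N at *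
    congr 1
    rw [neg_pow, ← zpow_natCast (vv ^ _), ← zpow_mul]
    congr 2
    have h4 : (2 : ℤ) * N = n * (n - 1) := by
      have : ((2 * N : ℕ) : ℤ) = ((n * (n - 1) : ℕ) : ℤ) := by rw [h2]
      rw [Nat.cast_mul, Nat.cast_mul, Nat.cast_sub (by omega)] at this
      simpa using this
    linear_combination (-(n : ℤ) - 1) * h4
  · intro s hs
    rw [List.mem_range] at hs
    rw [list_eig _ (wPlus n) (-vv ^ (-(2 * (n : ℤ) + 2))) (fun _ => 1)]
    · simp
    · intro t ht
      rw [List.mem_reverse, List.mem_range] at ht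
      rw [pow_one]
      exact RhatM_wPlus n t (by omega)
end
end

section
/- The braiding matrix is invariant under 180-degree rotation combined with conjugation of all states: for all a, b, c, d ∈ {1,…,n}, R̂^{(a,b)}_{(c,d)} = R̂^{(d̄,c̄)}_{(b̄,ā)}, where m̄ = n+1−m. (Equivalently, the R-matrix formula is preserved under the involution i ↔ l̄, j ↔ k̄; this is the key computation showing the Reshetikhin–Turaev matrix of a crossing is unchanged under orientation reversal.) -/
/-!
Statement 7: the braiding matrix is invariant under 180-degree rotation
combined with conjugation of all states: R̂^{(a,b)}_{(c,d)} = R̂^{(d̄,c̄)}_{(b̄,ā)},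
where m̄ = n+1−m.  Here F = ℚ(v), q = v^{2n}; indices in {1,…,n} are realized as
`Fin n` (0-based), and conjugation m̄ = n+1−m corresponds to `Fin.rev`.
-/

set_option synthInstance.maxHeartbeats 1000000
set_option maxHeartbeats 1000000

noncomputable section

theorem Rhat_rotation_conjugation (n : ℕ) (hn : 2 ≤ n) (a b c d : Fin n) :
    Rhat n (a, b) (c, d) = Rhat n (d.rev, c.rev) (b.rev, a.rev) := by
  simp only [Rhat, Fin.rev_inj, Fin.rev_lt_rev]
  congr 2
  · by_cases h1 : a = d
    · by_cases h2 : b = c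
      · subst h1 h2
        simp [eq_comm]
      · simp [h2, Ne.symm h2]
    · simp [h1, Ne.symm h1]
  · by_cases h1 : a = c
    · by_cases h2 : b = d
      · subst h1 h2
        simp
      · simp [h2, Ne.symm h2]
    · simp [h1, Ne.symm h1]
end
end
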